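/- Let p ≥ 2 and let g : ℝ^n × ℝ^m → ℝ be p times continuously differentiable with L_p-Lipschitz p-th derivative, and let M ≥ √2 · p · L_p. Fix (x,y) ∈ ℝ^n × ℝ^m and let (x̃,ỹ) be a saddle point of the regularized Taylor model Ω_{(x,y),p,M}, i.e. Ω_{(x,y),p,M}(x̃, y') ≤ Ω_{(x,y),p,M}(x̃, ỹ) ≤ Ω_{(x,y),p,M}(x', ỹ) for all x', y'. Then ‖∇g(x̃,ỹ)‖₂^{(p+1)/p} / (2^{(2p²+p+1)/(2p)} · p · (p+1)! · M^{1/p}) ≤ g(x, ỹ) − g(x̃, y). -/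

import Mathlib

/-- The point of `ℝⁿ × ℝᵐ` (with the Euclidean/`L²` product structure) with coordinates
`(x, y)`. -/
noncomputable def mkZ {n m : ℕ} (x : EuclideanSpace ℝ (Fin n)) (y : EuclideanSpace ℝ (Fin m)) :
    WithLp 2 (EuclideanSpace ℝ (Fin n) × EuclideanSpace ℝ (Fin m)) :=
  (WithLp.equiv 2 (EuclideanSpace ℝ (Fin n) × EuclideanSpace ℝ (Fin m))).symm (x, y)

/-- The `p`-th order Taylor polynomial `Φ_{z,p}(ẑ) = Σ_{i=0}^p (1/i!) ∇ⁱ g(z)[ẑ − z]ⁱ`. -/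
noncomputable def taylorPoly {n m : ℕ} (p : ℕ)
    (g : WithLp 2 (EuclideanSpace ℝ (Fin n) × EuclideanSpace ℝ (Fin m)) → ℝ)
    (z zh : WithLp 2 (EuclideanSpace ℝ (Fin n) × EuclideanSpace ℝ (Fin m))) : ℝ :=
  ∑ i ∈ Finset.range (p + 1),
    (1 / (Nat.factorial i : ℝ)) * iteratedFDeriv ℝ i g z (fun _ => zh - z)

/-- The regularized Taylor model
`Ω_{(x,y),p,M}(x̂,ŷ) = Φ_{(x,y),p}(x̂,ŷ) + (M(√2)^{p−1}/(p+1)!)‖x̂ − x‖^{p+1}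
− (M(√2)^{p−1}/(p+1)!)‖ŷ − y‖^{p+1}`. -/
noncomputable def omegaModel {n m : ℕ} (p : ℕ) (M : ℝ)
    (g : WithLp 2 (EuclideanSpace ℝ (Fin n) × EuclideanSpace ℝ (Fin m)) → ℝ)
    (x : EuclideanSpace ℝ (Fin n)) (y : EuclideanSpace ℝ (Fin m)) :
    WithLp 2 (EuclideanSpace ℝ (Fin n) × EuclideanSpace ℝ (Fin m)) → ℝ :=
  fun zh =>
    taylorPoly p g (mkZ x y) zh
      + M * Real.sqrt 2 ^ (p - 1) / (Nat.factorial (p + 1) : ℝ)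
          * ‖(WithLp.equiv 2 (EuclideanSpace ℝ (Fin n) × EuclideanSpace ℝ (Fin m)) zh).1 - x‖ ^ (p + 1)
      - M * Real.sqrt 2 ^ (p - 1) / (Nat.factorial (p + 1) : ℝ)
          * ‖(WithLp.equiv 2 (EuclideanSpace ℝ (Fin n) × EuclideanSpace ℝ (Fin m)) zh).2 - y‖ ^ (p + 1)

theorem aux_symm {E : Type} [NormedAddCommGroup E] [NormedSpace ℝ E] (n : ℕ) :
    ∀ {F : Type} [NormedAddCommGroup F] [NormedSpace ℝ F] (f : E → F)
    (_ : ContDiff ℝ ((n + 1 : ℕ) : WithTop ℕ∞) f) (z h u : E) (j : Fin (n + 1)),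
    iteratedFDeriv ℝ (n + 1) f z (Function.update (fun _ => h) j u) =
      iteratedFDeriv ℝ n (fderiv ℝ f) z (fun _ => h) u := by
  induction n with
  | zero =>
    intro F _ _ f hf z h u j
    have : j = 0 := by omega
    subst this
    simp [iteratedFDeriv_succ_apply_right]
  | succ n ih =>
    intro F _ _ f hf z h u j
    have hf1 : ContDiff ℝ ((n + 1 : ℕ) : WithTop ℕ∞) (fderiv ℝ f) :=
      hf.fderiv_right (by norm_cast)
    have hf2 : ContDiff ℝ (n : WithTop ℕ∞) (fderiv ℝ (fderiv ℝ f)) :=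
      hf1.fderiv_right (by norm_cast)
    rw [iteratedFDeriv_succ_apply_right]
    refine Fin.lastCases ?_ (fun j' => ?_) j
    · simp only [Function.update_self]
      congr 2
      ext i
      simp [Fin.init]
    · have e1 : (Fin.init (Function.update (fun _ : Fin (n+1+1) => h) j'.castSucc u) : Fin (n+1) → E)
          = Function.update (fun _ => h) j' u := by
        ext i
        simp only [Fin.init, Function.update_apply, Fin.castSucc_inj]
      have e2 : Function.update (fun _ : Fin (n+1+1) => h) j'.castSucc u (Fin.last (n+1)) = h := by
        exact Function.update_of_ne (Fin.castSucc_lt_last j').ne' _ _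
      rw [e1, e2, ih (fderiv ℝ f) hf1 z h u j', iteratedFDeriv_succ_apply_right (f := fderiv ℝ f)]
      have hs : fderiv ℝ (fderiv ℝ f) =
          (ContinuousLinearMap.flipₗᵢ ℝ E E F) ∘ (fderiv ℝ (fderiv ℝ f)) := by
        ext w a b
        have : IsSymmSndFDerivAt ℝ f w := by
          apply hf.contDiffAt.isSymmSndFDerivAt
          simp only [minSmoothness_of_isRCLikeNormedField]
          norm_cast; omega
        simpa using this a b
      have h3 := ContinuousLinearMap.iteratedFDeriv_comp_left (F := E →L[ℝ] E →L[ℝ] F)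
        (G := E →L[ℝ] E →L[ℝ] F) ((ContinuousLinearMap.flipₗᵢ ℝ E E F).toContinuousLinearEquiv :
          (E →L[ℝ] E →L[ℝ] F) →L[ℝ] (E →L[ℝ] E →L[ℝ] F))
        (hf2.contDiffAt (x := z)) (i := n) le_rfl
      have h4 : iteratedFDeriv ℝ n (fderiv ℝ (fderiv ℝ f)) z (fun _ => h) h u =
          iteratedFDeriv ℝ n (fderiv ℝ (fderiv ℝ f)) z (fun _ => h) u h := by
        have h5 := congrArg (fun A => A (fun _ => h) h u) h3
        have h6 := congrArg (fun q : E → E →L[ℝ] E →L[ℝ] F => iteratedFDeriv ℝ n q z (fun _ => h) h u) hs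
        exact h6.trans h5
      exact h4.symm

noncomputable def TP {E F : Type} [NormedAddCommGroup E] [NormedSpace ℝ E]
    [NormedAddCommGroup F] [NormedSpace ℝ F] (p : ℕ) (f : E → F) (z w : E) : F :=
  ∑ i ∈ Finset.range (p + 1), (1 / (Nat.factorial i : ℝ)) • iteratedFDeriv ℝ i f z (fun _ => w - z)

theorem TP_self {E F : Type} [NormedAddCommGroup E] [NormedSpace ℝ E]
    [NormedAddCommGroup F] [NormedSpace ℝ F] (p : ℕ) (f : E → F) (z : E) : TP p f z z = f z := by
  unfold TP
  rw [Finset.sum_range_succ', Finset.sum_eq_zero]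
  · simp
  · intro i _
    rw [(iteratedFDeriv ℝ (i+1) f z).map_coord_zero 0 (by simp), smul_zero]

theorem TP_hasFDerivAt {E F : Type} [NormedAddCommGroup E] [NormedSpace ℝ E]
    [NormedAddCommGroup F] [NormedSpace ℝ F] (p : ℕ) (f : E → F)
    (hf : ContDiff ℝ ((p + 1 : ℕ) : WithTop ℕ∞) f) (z w : E) :
    HasFDerivAt (TP (p + 1) f z) (TP p (fderiv ℝ f) z w) w := by
  have h1 : ∀ i ≤ p, HasFDerivAt
      (fun w => (1 / (Nat.factorial (i+1) : ℝ)) • iteratedFDeriv ℝ (i+1) f z (fun _ => w - z))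
      ((1 / (Nat.factorial i : ℝ)) • iteratedFDeriv ℝ i (fderiv ℝ f) z (fun _ => w - z)) w := by
    intro i hi
    have hA := (iteratedFDeriv ℝ (i+1) f z).hasFDerivAt (fun _ => w - z)
    have hB : HasFDerivAt (fun w : E => (fun _ : Fin (i+1) => w - z))
        (ContinuousLinearMap.pi fun _ => ContinuousLinearMap.id ℝ E) w :=
      hasFDerivAt_pi.2 fun _ => (hasFDerivAt_id w).sub_const z
    have hC := (hA.comp w hB).const_smul (1 / (Nat.factorial (i+1) : ℝ))
    refine hC.congr_fderiv ?_
    ext u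
    have hfi : ContDiff ℝ ((i + 1 : ℕ) : WithTop ℕ∞) f := hf.of_le (by norm_cast; omega)
    simp only [smul_apply, ContinuousLinearMap.comp_apply,
      ContinuousMultilinearMap.linearDeriv_apply, ContinuousLinearMap.coe_pi',
      ContinuousLinearMap.id_apply, aux_symm i f hfi z (w - z) u]
    rw [Finset.sum_const, Finset.card_univ, Fintype.card_fin, ← Nat.cast_smul_eq_nsmul ℝ, smul_smul]
    congr 1
    rw [Nat.factorial_succ]; push_cast; field_simp
  have h2 : HasFDerivAt (fun w => ∑ i ∈ Finset.range (p + 1),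
      (1 / (Nat.factorial (i+1) : ℝ)) • iteratedFDeriv ℝ (i+1) f z (fun _ => w - z))
      (TP p (fderiv ℝ f) z w) w := by
    unfold TP
    exact HasFDerivAt.fun_sum fun i hi => h1 i (by simp at hi; omega)
  have : TP (p+1) f z = fun w => (∑ i ∈ Finset.range (p + 1),
      (1 / (Nat.factorial (i+1) : ℝ)) • iteratedFDeriv ℝ (i+1) f z (fun _ => w - z)) + f z := by
    ext w
    unfold TP
    rw [Finset.sum_range_succ']
    simp
  rw [this]
  exact h2.add_const _

theorem taylor_bound {E : Type} [NormedAddCommGroup E] [NormedSpace ℝ E] (z : E) (L : ℝ) (p : ℕ) :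
    ∀ {F : Type} [NormedAddCommGroup F] [NormedSpace ℝ F] (f : E → F)
    (_ : ContDiff ℝ (p : WithTop ℕ∞) f)
    (_ : ∀ w, ‖iteratedFDeriv ℝ p f w - iteratedFDeriv ℝ p f z‖ ≤ L * ‖w - z‖) (w : E),
    ‖f w - TP p f z w‖ ≤ L / (Nat.factorial (p + 1) : ℝ) * ‖w - z‖ ^ (p + 1) := by
  induction p with
  | zero =>
    intro F _ _ f hf hL w
    have := hL w
    rw [iteratedFDeriv_zero_eq_comp] at this
    simp only [Function.comp_apply, ← map_sub, LinearIsometryEquiv.norm_map] at this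
    simpa [TP] using this
  | succ p ih =>
    intro F _ _ f hf hL w
    have hf1 : ContDiff ℝ (p : WithTop ℕ∞) (fderiv ℝ f) := hf.fderiv_right (by norm_cast)
    have hL1 : ∀ w, ‖iteratedFDeriv ℝ p (fderiv ℝ f) w - iteratedFDeriv ℝ p (fderiv ℝ f) z‖
        ≤ L * ‖w - z‖ := by
      intro w
      have := hL w
      rw [iteratedFDeriv_succ_eq_comp_right, iteratedFDeriv_succ_eq_comp_right,
        Function.comp_apply, Function.comp_apply] at this
      have h9 := (continuousMultilinearCurryRightEquiv' ℝ p E F).symm.isometry.dist_eq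
        (iteratedFDeriv ℝ p (fderiv ℝ f) w) (iteratedFDeriv ℝ p (fderiv ℝ f) z)
      rw [dist_eq_norm, dist_eq_norm] at h9
      rw [← h9]
      exact this
    have key := ih (fderiv ℝ f) hf1 hL1
    set v := w - z with hv
    have hd : ∀ t : ℝ, HasDerivAt (fun t : ℝ => f (z + t • v) - TP (p+1) f z (z + t • v))
        ((fderiv ℝ f (z + t • v) - TP p (fderiv ℝ f) z (z + t • v)) v) t := by
      intro t
      have h1 : HasDerivAt (fun t : ℝ => z + t • v) v t := by
        simpa using ((hasDerivAt_id t).smul_const v).const_add z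
      have h2 : HasFDerivAt f (fderiv ℝ f (z + t • v)) (z + t • v) :=
        ((hf.differentiable (by norm_cast)) _).hasFDerivAt
      exact (h2.sub (TP_hasFDerivAt p f hf z _)).comp_hasDerivAt t h1
    have hB : ∀ t : ℝ, HasDerivAt (fun t : ℝ => L / (Nat.factorial (p + 1 + 1) : ℝ) * ‖v‖ ^ (p+1+1) * t ^ (p + 1 + 1))
        (L / (Nat.factorial (p + 1) : ℝ) * ‖v‖ ^ (p+1+1) * t ^ (p + 1)) t := by
      intro t
      refine ((hasDerivAt_pow (p+1+1) t).const_mul _).congr_deriv ?_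
      rw [Nat.factorial_succ (p+1)]; push_cast; field_simp
      try simp
    have := image_norm_le_of_norm_deriv_right_le_deriv_boundary (a := 0) (b := 1)
      (fun t _ => (hd t).continuousAt.continuousWithinAt)
      (fun t _ => (hd t).hasDerivWithinAt) (by simp [TP_self]) hB
      (fun t ht => by
        refine (ContinuousLinearMap.le_opNorm _ _).trans ?_
        refine (mul_le_mul_of_nonneg_right (key _) (norm_nonneg _)).trans (le_of_eq ?_)
        simp only [add_sub_cancel_left, norm_smul, Real.norm_eq_abs, abs_of_nonneg ht.1, mul_pow]
        ring) (Set.right_mem_Icc.2 zero_le_one)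
    simpa [hv] using this

theorem norm_iteratedFDeriv_fderiv_sub {E F : Type} [NormedAddCommGroup E] [NormedSpace ℝ E]
    [NormedAddCommGroup F] [NormedSpace ℝ F] (p : ℕ) (f : E → F) (w z : E) :
    ‖iteratedFDeriv ℝ p (fderiv ℝ f) w - iteratedFDeriv ℝ p (fderiv ℝ f) z‖ =
      ‖iteratedFDeriv ℝ (p + 1) f w - iteratedFDeriv ℝ (p + 1) f z‖ := by
  rw [iteratedFDeriv_succ_eq_comp_right, iteratedFDeriv_succ_eq_comp_right,
    Function.comp_apply, Function.comp_apply]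
  have h9 := (continuousMultilinearCurryRightEquiv' ℝ p E F).symm.isometry.dist_eq
    (iteratedFDeriv ℝ p (fderiv ℝ f) w) (iteratedFDeriv ℝ p (fderiv ℝ f) z)
  rw [dist_eq_norm, dist_eq_norm] at h9
  exact h9.symm

theorem foc {E H : Type} [NormedAddCommGroup E] [NormedSpace ℝ E]
    [NormedAddCommGroup H] [InnerProductSpace ℝ H] (Φ : E → ℝ) (D : E →L[ℝ] ℝ) (w e : E)
    (hΦ : HasFDerivAt Φ D w) (a u : H) (c : ℝ) (hc : 0 ≤ c) (p : ℕ) (hp : 2 ≤ p)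
    (hmin : ∀ t : ℝ, Φ w + c * ‖a‖ ^ (p + 1) ≤ Φ (w + t • e) + c * ‖a + t • u‖ ^ (p + 1)) :
    |D e| ≤ c * (p + 1) * ‖a‖ ^ p * ‖u‖ := by
  have hp1 : (1 : ℝ) < ((p + 1 : ℕ) : ℝ) := by norm_cast; omega
  have h1 : HasDerivAt (fun t : ℝ => a + t • u) u 0 := by
    simpa using ((hasDerivAt_id (0:ℝ)).smul_const u).const_add a
  have h2 : HasDerivAt (fun t : ℝ => w + t • e) e 0 := by
    simpa using ((hasDerivAt_id (0:ℝ)).smul_const e).const_add w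
  have h3 := (hasFDerivAt_norm_rpow (a + (0:ℝ) • u) hp1).comp_hasDerivAt (0:ℝ) h1
  have hΦ' : HasFDerivAt Φ D (w + (0:ℝ) • e) := by simpa using hΦ
  have h4 := (hΦ'.comp_hasDerivAt (0:ℝ) h2).add (h3.const_mul c)
  have h5 := IsLocalMin.hasDerivAt_eq_zero (Filter.Eventually.of_forall fun t => by
    have := hmin t
    simp only [Pi.add_apply, Function.comp_apply, Real.rpow_natCast, zero_smul, add_zero]
    exact this) h4
  have e1 : ‖a‖ ^ (((p + 1 : ℕ) : ℝ) - 2) = ‖a‖ ^ (p - 1) := by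
    rw [← Real.rpow_natCast]; congr 1
    rw [Nat.cast_sub (by omega)]; push_cast; ring
  simp only [zero_smul, add_zero, smul_apply, smul_eq_mul, innerSL_apply_apply, e1] at h5
  have h6 : D e = -(c * (((p + 1 : ℕ) : ℝ) * ‖a‖ ^ (p - 1) * inner ℝ a u)) := by linarith
  rw [h6, abs_neg, abs_mul, abs_mul, abs_mul, abs_of_nonneg hc, abs_of_nonneg (by positivity),
    abs_of_nonneg (by positivity)]
  have h7 := abs_real_inner_le_norm a u
  have e2 : ‖a‖ ^ p = ‖a‖ ^ (p - 1) * ‖a‖ := by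
    rw [← pow_succ]; congr 1; omega
  rw [e2]
  push_cast
  calc c * ((p + 1) * ‖a‖ ^ (p - 1) * |inner ℝ a u|)
      ≤ c * ((p + 1) * ‖a‖ ^ (p - 1) * (‖a‖ * ‖u‖)) := by gcongr
    _ = _ := by ring

theorem num_final (p : ℕ) (hp : 2 ≤ p) (M G a b r gap : ℝ) (hM : 0 < M) (hG : 0 ≤ G)
    (ha : 0 ≤ a) (hb : 0 ≤ b) (hr : 0 ≤ r) (hrr : r ^ 2 = a ^ 2 + b ^ 2)
    (h1 : G ≤ Real.sqrt 2 ^ (p + 1) * M * r ^ p)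
    (h2 : M / (p * (Nat.factorial (p + 1) : ℝ)) * (a ^ (p + 1) + b ^ (p + 1)) ≤ gap) :
    G ^ (((p : ℝ) + 1) / p)
        / ((2 : ℝ) ^ ((2 * (p : ℝ) ^ 2 + p + 1) / (2 * p)) * p * (Nat.factorial (p + 1) : ℝ)
            * M ^ (1 / (p : ℝ))) ≤ gap := by
  have hp0 : (0 : ℝ) < p := by norm_cast; omega
  have hp1 : (1 : ℝ) ≤ p := by norm_cast; omega
  have hs : ∀ t : ℝ, 0 ≤ t → (t ^ 2) ^ (((p : ℝ) + 1) / 2) = t ^ (p + 1) := by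
    intro t ht
    rw [← Real.rpow_natCast t 2, ← Real.rpow_mul ht, ← Real.rpow_natCast]
    congr 1; push_cast; ring
  have hpm : r ^ (p + 1) ≤ (2 : ℝ) ^ (((p : ℝ) - 1) / 2) * (a ^ (p + 1) + b ^ (p + 1)) := by
    have h0 := NNReal.rpow_add_le_mul_rpow_add_rpow ⟨a ^ 2, sq_nonneg a⟩ ⟨b ^ 2, sq_nonneg b⟩
      (p := ((p : ℝ) + 1) / 2) (by linarith)
    have : (a ^ 2 + b ^ 2) ^ (((p : ℝ) + 1) / 2) ≤ (2 : ℝ) ^ (((p : ℝ) + 1) / 2 - 1) *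
        ((a ^ 2) ^ (((p : ℝ) + 1) / 2) + (b ^ 2) ^ (((p : ℝ) + 1) / 2)) := by exact_mod_cast h0
    rw [← hrr, hs r hr, hs a ha, hs b hb] at this
    convert this using 3
    ring
  have h3 : Real.sqrt 2 ^ (p + 1) = (2 : ℝ) ^ (((p : ℝ) + 1) / 2) := by
    rw [Real.sqrt_eq_rpow, ← Real.rpow_natCast, ← Real.rpow_mul (by norm_num)]
    congr 1; push_cast; ring
  have h4 : G ^ (((p : ℝ) + 1) / p) ≤
      (2 : ℝ) ^ ((((p : ℝ) + 1) / 2) * (((p : ℝ) + 1) / p)) * (M * M ^ (1 / (p : ℝ))) * r ^ (p + 1) := by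
    refine (Real.rpow_le_rpow hG h1 (by positivity)).trans (le_of_eq ?_)
    rw [h3, Real.mul_rpow (by positivity) (by positivity), Real.mul_rpow (by positivity) hM.le,
      ← Real.rpow_mul (by norm_num)]
    congr 1
    · congr 1
      nth_rewrite 2 [← Real.rpow_one M]
      rw [← Real.rpow_add hM]
      congr 1; field_simp
    · rw [← Real.rpow_natCast, ← Real.rpow_mul hr, ← Real.rpow_natCast]
      congr 1; push_cast; field_simp
  have h5 : (2 : ℝ) ^ ((2 * (p : ℝ) ^ 2 + p + 1) / (2 * p)) =
      (2 : ℝ) ^ ((((p : ℝ) + 1) / 2) * (((p : ℝ) + 1) / p)) * (2 : ℝ) ^ (((p : ℝ) - 1) / 2) := by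
    rw [← Real.rpow_add (by norm_num)]
    congr 1; field_simp; ring
  refine le_trans ?_ h2
  rw [div_le_iff₀ (by positivity), h5]
  refine h4.trans ?_
  refine (mul_le_mul_of_nonneg_left hpm (by positivity)).trans (le_of_eq ?_)
  field_simp

set_option maxHeartbeats 1000000 in
/-- The paper's saddle-point version of Lemma 5.2: if `M ≥ √2 p L_p` and `(x̃,ỹ)` is a saddle
point of the regularized Taylor model `Ω_{(x,y),p,M}`, then
`‖∇g(x̃,ỹ)‖^{(p+1)/p} / (2^{(2p²+p+1)/(2p)} p (p+1)! M^{1/p}) ≤ g(x, ỹ) − g(x̃, y)`. -/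
theorem gradient_norm_duality_gap_bound {n m : ℕ} (p : ℕ) (hp : 2 ≤ p)
    (Lp M : ℝ) (hLp : 0 < Lp) (hM : Real.sqrt 2 * p * Lp ≤ M)
    (g : WithLp 2 (EuclideanSpace ℝ (Fin n) × EuclideanSpace ℝ (Fin m)) → ℝ)
    (hg : ContDiff ℝ (p : ℕ∞) g)
    (hLip : ∀ z₁ z₂, ‖iteratedFDeriv ℝ p g z₁ - iteratedFDeriv ℝ p g z₂‖ ≤ Lp * ‖z₁ - z₂‖)
    (x xt : EuclideanSpace ℝ (Fin n)) (y yt : EuclideanSpace ℝ (Fin m))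
    (hsaddle : ∀ (x' : EuclideanSpace ℝ (Fin n)) (y' : EuclideanSpace ℝ (Fin m)),
      omegaModel p M g x y (mkZ xt y') ≤ omegaModel p M g x y (mkZ xt yt) ∧
      omegaModel p M g x y (mkZ xt yt) ≤ omegaModel p M g x y (mkZ x' yt)) :
    ‖gradient g (mkZ xt yt)‖ ^ (((p : ℝ) + 1) / p)
        / ((2 : ℝ) ^ ((2 * (p : ℝ) ^ 2 + p + 1) / (2 * p)) * p * (Nat.factorial (p + 1) : ℝ)
            * M ^ (1 / (p : ℝ)))
      ≤ g (mkZ x yt) - g (mkZ xt y) := by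
  have hp0 : (0 : ℝ) < p := by norm_cast; omega
  have hp2 : (2 : ℝ) ≤ p := by exact_mod_cast hp
  have hq : 0 < Real.sqrt 2 := by positivity
  have hqq : Real.sqrt 2 * Real.sqrt 2 = 2 := Real.mul_self_sqrt (by norm_num)
  have hq1 : 1 ≤ Real.sqrt 2 := by nlinarith
  have hMpos : 0 < M := lt_of_lt_of_le (by positivity) hM
  have hML : 2 * Lp ≤ M := by
    refine le_trans ?_ hM
    have : 2 ≤ Real.sqrt 2 * p := by nlinarith
    nlinarith
  have hg' : ContDiff ℝ (p : WithTop ℕ∞) g := hg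
  obtain ⟨k, rfl⟩ : ∃ k, p = k + 1 := ⟨p - 1, by omega⟩
  have hcS : 1 ≤ Real.sqrt 2 ^ k := one_le_pow₀ hq1
  have hcS' : Real.sqrt 2 ≤ Real.sqrt 2 ^ k := le_self_pow₀ hq1 (by omega)
  set c : ℝ := M * Real.sqrt 2 ^ k / (Nat.factorial (k + 1 + 1) : ℝ) with hc
  have hc0 : 0 ≤ c := by positivity
  have hT : ∀ z w, taylorPoly (k + 1) g z w = TP (k + 1) g z w := fun z w => rfl
  have hΩ : ∀ x' y', omegaModel (k + 1) M g x y (mkZ x' y') =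
      TP (k + 1) g (mkZ x y) (mkZ x' y') + c * ‖x' - x‖ ^ (k + 1 + 1)
        - c * ‖y' - y‖ ^ (k + 1 + 1) := fun x' y' => rfl
  simp only [hΩ] at hsaddle
  have hnorm : ∀ (u : EuclideanSpace ℝ (Fin n)) (v : EuclideanSpace ℝ (Fin m)),
      ‖mkZ u v‖ ^ 2 = ‖u‖ ^ 2 + ‖v‖ ^ 2 := fun u v => WithLp.prod_norm_sq_eq_of_L2 _
  have hsub : ∀ (u u' : EuclideanSpace ℝ (Fin n)) (v v' : EuclideanSpace ℝ (Fin m)),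
      mkZ u v - mkZ u' v' = mkZ (u - u') (v - v') := fun _ _ _ _ => rfl
  have haddx : ∀ (t : ℝ) (u : EuclideanSpace ℝ (Fin n)),
      mkZ xt yt + t • mkZ u 0 = mkZ (xt + t • u) yt := by
    intro t u
    have : mkZ xt yt + t • mkZ u 0 = mkZ (xt + t • u) (yt + t • 0) := rfl
    rw [this, smul_zero, add_zero]
  have haddy : ∀ (t : ℝ) (v : EuclideanSpace ℝ (Fin m)),
      mkZ xt yt + t • mkZ 0 v = mkZ xt (yt + t • v) := by
    intro t v
    have : mkZ xt yt + t • mkZ 0 v = mkZ (xt + t • 0) (yt + t • v) := rfl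
    rw [this, smul_zero, add_zero]
  have hx0 : ∀ u : EuclideanSpace ℝ (Fin n), ‖(mkZ u 0 : WithLp 2 (EuclideanSpace ℝ (Fin n) × EuclideanSpace ℝ (Fin m)))‖ = ‖u‖ := by
    intro u
    have := hnorm u 0
    rw [norm_zero] at this
    exact (sq_eq_sq₀ (norm_nonneg _) (norm_nonneg _)).1 (by linarith)
  have hy0 : ∀ v : EuclideanSpace ℝ (Fin m), ‖(mkZ 0 v : WithLp 2 (EuclideanSpace ℝ (Fin n) × EuclideanSpace ℝ (Fin m)))‖ = ‖v‖ := by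
    intro v
    have := hnorm 0 v
    rw [norm_zero] at this
    exact (sq_eq_sq₀ (norm_nonneg _) (norm_nonneg _)).1 (by linarith)
  have hfac : (0 : ℝ) < (Nat.factorial (k + 1 + 1) : ℝ) := by positivity
  -- Taylor bounds
  have hTB := taylor_bound (mkZ x y) Lp (k + 1) g hg' (fun w => hLip w _)
  have hg1 : ContDiff ℝ (k : WithTop ℕ∞) (fderiv ℝ g) := hg'.fderiv_right (by norm_cast)
  have hTB' := taylor_bound (mkZ x y) Lp k (fderiv ℝ g) hg1 (fun w => by
      have := hLip w (mkZ x y)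
      exact (norm_iteratedFDeriv_fderiv_sub k g w _).le.trans this) (mkZ xt yt)
  set r := ‖mkZ xt yt - mkZ x y‖ with hrdef
  have hrr : r ^ 2 = ‖xt - x‖ ^ 2 + ‖yt - y‖ ^ 2 := by rw [hrdef, hsub, hnorm]
  have hr0 : 0 ≤ r := norm_nonneg _
  have har : ‖xt - x‖ ≤ r := abs_le_of_sq_le_sq' (by nlinarith [sq_nonneg ‖yt - y‖]) hr0 |>.2
  have hbr : ‖yt - y‖ ≤ r := abs_le_of_sq_le_sq' (by nlinarith [sq_nonneg ‖xt - x‖]) hr0 |>.2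
  refine num_final (k + 1) hp M _ ‖xt - x‖ ‖yt - y‖ r _ hMpos (norm_nonneg _) (norm_nonneg _)
    (norm_nonneg _) hr0 hrr ?_ ?_
  · -- gradient bound
    have hD := TP_hasFDerivAt k g hg' (mkZ x y) (mkZ xt yt)
    set D := TP k (fderiv ℝ g) (mkZ x y) (mkZ xt yt) with hDdef
    have hDx : ∀ u, |D (mkZ u 0)| ≤ c * ((k + 1 : ℕ) + 1) * ‖xt - x‖ ^ (k + 1) * ‖u‖ := by
      intro u
      refine foc _ D _ (mkZ u 0) hD (xt - x) u c hc0 (k + 1) hp ?_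
      intro t
      have := (hsaddle (xt + t • u) y).2
      rw [haddx, sub_add_eq_add_sub]
      linarith
    have hDy : ∀ v, |D (mkZ 0 v)| ≤ c * ((k + 1 : ℕ) + 1) * ‖yt - y‖ ^ (k + 1) * ‖v‖ := by
      intro v
      have := foc _ (-D) _ (mkZ 0 v) hD.neg (yt - y) v c hc0 (k + 1) hp (by
        intro t
        have := (hsaddle x (yt + t • v)).1
        simp only [Pi.neg_apply]
        rw [haddy, sub_add_eq_add_sub]
        linarith)
      simpa only [neg_apply, abs_neg] using this
    set C : ℝ := c * ((k + 1 : ℕ) + 1) with hC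
    have hC0 : 0 ≤ C := by positivity
    have hCM : C ≤ M * Real.sqrt 2 ^ k := by
      have e : C = M * Real.sqrt 2 ^ k / (Nat.factorial (k + 1) : ℝ) := by
        rw [hC, hc, Nat.factorial_succ (k + 1)]; push_cast; field_simp
      rw [e]
      exact div_le_self (by positivity) (by exact_mod_cast Nat.one_le_iff_ne_zero.2 (Nat.factorial_ne_zero _))
    have hDn : ‖D‖ ≤ C * r ^ (k + 1) := by
      refine ContinuousLinearMap.opNorm_le_bound _ (by positivity) fun h => ?_
      obtain ⟨u, v, rfl⟩ : ∃ u v, h = mkZ u v := ⟨h.ofLp.1, h.ofLp.2, rfl⟩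
      have e0 : mkZ u v = mkZ u 0 + mkZ 0 v := by
        have : (mkZ u 0 + mkZ 0 v : WithLp 2 (EuclideanSpace ℝ (Fin n) × EuclideanSpace ℝ (Fin m)))
          = mkZ (u + 0) (0 + v) := rfl
        rw [this, add_zero, zero_add]
      have hCS : ‖xt - x‖ * ‖u‖ + ‖yt - y‖ * ‖v‖ ≤ r * ‖mkZ u v‖ := by
        refine abs_le_of_sq_le_sq' ?_ (by positivity) |>.2
        rw [mul_pow, hrr, hnorm]
        nlinarith [sq_nonneg (‖xt - x‖ * ‖v‖ - ‖yt - y‖ * ‖u‖)]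
      have h1 : ‖D (mkZ u v)‖ ≤ |D (mkZ u 0)| + |D (mkZ 0 v)| := by
        rw [e0, map_add]; exact abs_add_le _ _
      have h2 : ‖xt - x‖ ^ k ≤ r ^ k := pow_le_pow_left₀ (norm_nonneg _) har k
      have h3 : ‖yt - y‖ ^ k ≤ r ^ k := pow_le_pow_left₀ (norm_nonneg _) hbr k
      calc ‖D (mkZ u v)‖ ≤ C * ‖xt - x‖ ^ (k + 1) * ‖u‖ + C * ‖yt - y‖ ^ (k + 1) * ‖v‖ :=
            h1.trans (add_le_add (hDx u) (hDy v))
        _ = C * (‖xt - x‖ ^ k * (‖xt - x‖ * ‖u‖) + ‖yt - y‖ ^ k * (‖yt - y‖ * ‖v‖)) := by ring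
        _ ≤ C * (r ^ k * (‖xt - x‖ * ‖u‖) + r ^ k * (‖yt - y‖ * ‖v‖)) := by gcongr
        _ = C * r ^ k * (‖xt - x‖ * ‖u‖ + ‖yt - y‖ * ‖v‖) := by ring
        _ ≤ C * r ^ k * (r * ‖mkZ u v‖) := by gcongr
        _ = _ := by ring
    have hgr : ‖gradient g (mkZ xt yt)‖ = ‖fderiv ℝ g (mkZ xt yt)‖ := by
      unfold gradient
      exact LinearIsometryEquiv.norm_map _ _
    rw [hgr]
    have hL1 : Lp / (Nat.factorial (k + 1) : ℝ) ≤ Lp :=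
      div_le_self hLp.le (by exact_mod_cast Nat.one_le_iff_ne_zero.2 (Nat.factorial_ne_zero _))
    have hfin : C + Lp ≤ Real.sqrt 2 ^ (k + 1 + 1) * M := by
      have : Real.sqrt 2 ^ (k + 1 + 1) = 2 * Real.sqrt 2 ^ k := by
        rw [pow_succ, pow_succ, mul_assoc, hqq]; ring
      rw [this]
      have h8 : M * 1 ≤ M * Real.sqrt 2 ^ k := mul_le_mul_of_nonneg_left hcS hMpos.le
      linarith
    calc ‖fderiv ℝ g (mkZ xt yt)‖ = ‖(fderiv ℝ g (mkZ xt yt) - D) + D‖ := by rw [sub_add_cancel]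
      _ ≤ ‖fderiv ℝ g (mkZ xt yt) - D‖ + ‖D‖ := norm_add_le _ _
      _ ≤ Lp / (Nat.factorial (k + 1) : ℝ) * r ^ (k + 1) + C * r ^ (k + 1) := add_le_add hTB' hDn
      _ ≤ Lp * r ^ (k + 1) + C * r ^ (k + 1) := by gcongr
      _ = (C + Lp) * r ^ (k + 1) := by ring
      _ ≤ _ := by gcongr
  · -- gap lower bound
    have s1 := (hsaddle x y).1
    have s2 := (hsaddle x y).2
    rw [sub_self, norm_zero, zero_pow (by omega)] at s1 s2
    have t1 := hTB (mkZ xt y)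
    have t2 := hTB (mkZ x yt)
    rw [hsub, sub_self, hx0, Real.norm_eq_abs] at t1
    rw [hsub, sub_self, hy0, Real.norm_eq_abs] at t2
    have t1' := (abs_le.1 t1).2
    have t2' := (abs_le.1 t2).1
    set S := ‖xt - x‖ ^ (k + 1 + 1) with hS
    set S' := ‖yt - y‖ ^ (k + 1 + 1) with hS'
    have hS0 : 0 ≤ S := by positivity
    have hS0' : 0 ≤ S' := by positivity
    have hcoef : M / (((k + 1 : ℕ) : ℝ) * (Nat.factorial (k + 1 + 1) : ℝ))
        ≤ c - Lp / (Nat.factorial (k + 1 + 1) : ℝ) := by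
      rw [hc, ← sub_div, ← div_div, div_le_div_iff_of_pos_right hfac]
      have : M / ((k + 1 : ℕ) : ℝ) ≤ M / 2 := by gcongr
      have h8 : M * 1 ≤ M * Real.sqrt 2 ^ k := mul_le_mul_of_nonneg_left hcS hMpos.le
      linarith
    have h3 := mul_le_mul_of_nonneg_right hcoef (add_nonneg hS0 hS0')
    refine h3.trans ?_
    rw [sub_mul, mul_add, mul_add]
    linarith
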